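/- (Lemma 4, second inequality.) For every z ∈ C¹(cl Ω_γ) and every i ∈ {1,…,n}, ∫_{Ω_γ} (I_{x_i}z)² χ² dx dy ≤ 2γ ∫_{Ω_γ} (∂z/∂x_i)² χ² dx dy, where I_{x_i}z = ∂/∂x_i ∫₀^{y_m} z(x,y′,τ) dτ = ∫₀^{y_m} (∂z/∂x_i)(x,y′,τ) dτ. -/

import Mathlib

open MeasureTheory Real Finset Function

noncomputable section

abbrev Pt (n m : ℕ) := (Fin n → ℝ) × (Fin m → ℝ)

def pd {n m : ℕ} (v : Pt n m) (f : Pt n m → ℝ) (p : Pt n m) : ℝ :=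
  lineDeriv ℝ f p v

def pd2 {n m : ℕ} (v w : Pt n m) (f : Pt n m → ℝ) (p : Pt n m) : ℝ :=
  lineDeriv ℝ (pd v f) p w

def ex {n m : ℕ} (i : Fin n) : Pt n m := (Pi.single i 1, 0)

def ey {n m : ℕ} (j : Fin m) : Pt n m := (0, Pi.single j 1)

def lastIdx (m : ℕ) [NeZero m] : Fin m :=
  ⟨m - 1, Nat.sub_lt (Nat.pos_of_ne_zero (NeZero.ne m)) one_pos⟩

def psiF {n m : ℕ} [NeZero n] (δ α₀ : ℝ) (x0 : Fin n → ℝ) (y0 : Fin m → ℝ) (p : Pt n m) : ℝ :=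
  δ * p.1 0 + (1/2) * ∑ i ∈ univ.erase (0 : Fin n), (p.1 i - x0 i)^2
    + (1/2) * ∑ j, (p.2 j - y0 j)^2 + α₀

def chiF {n m : ℕ} [NeZero n] (lam ν δ α₀ : ℝ) (x0 : Fin n → ℝ) (y0 : Fin m → ℝ) (p : Pt n m) : ℝ :=
  Real.exp (lam * (psiF δ α₀ x0 y0 p) ^ (-ν))

def OmegaG {n m : ℕ} [NeZero n] (δ γ α₀ : ℝ) (x0 : Fin n → ℝ) (y0 : Fin m → ℝ) : Set (Pt n m) :=
  {p | 0 < p.1 0 ∧ α₀ < psiF δ α₀ x0 y0 p ∧ psiF δ α₀ x0 y0 p < α₀ + γ}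

def L0 {n m : ℕ} [NeZero n] (η₀ : ℝ) (a : Fin m → Fin m → Pt n m → ℝ)
    (φ : Pt n m → ℝ) (p : Pt n m) : ℝ :=
  (p.1 0 + η₀)⁻¹ * pd2 (ex 0) (ex 0) φ p
    + (p.1 0 + η₀) *
      ((∑ i ∈ univ.erase (0 : Fin n), pd2 (ex i) (ex i) φ p)
        - ∑ i, ∑ j, a i j p * pd2 (ey i) (ey j) φ p)

def Iop {n m : ℕ} [NeZero m] (z : Pt n m → ℝ) (p : Pt n m) : ℝ :=
  ∫ τ in (0:ℝ)..(p.2 (lastIdx m)), z (p.1, Function.update p.2 (lastIdx m) τ)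

def C2Bound {n m : ℕ} (M : ℝ) (f : Pt n m → ℝ) : Prop :=
  ContDiff ℝ 2 f ∧ ∀ p : Pt n m, |f p| ≤ M ∧ ‖fderiv ℝ f p‖ ≤ M ∧ ‖fderiv ℝ (fderiv ℝ f) p‖ ≤ M

/-! On each line parallel to the `y_m`-axis, Cauchy–Schwarz gives
`(∫₀ᵗ f)² χ(t)² ≤ |t| |∫₀ᵗ f² χ(t)²| ≤ |t| ∫ f² χ²`, the last step because `χ²` only grows towards
`t = 0`. The section of `Ω_γ` lies in `|t| < √(2γ)`, so integrating in `t` produces the factor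
`∫ |t| dt = 2γ`, and Tonelli's theorem assembles the lines. -/

open scoped ENNReal Topology

section Calculus

variable {𝕜 E F : Type*} [NontriviallyNormedField 𝕜] [NormedAddCommGroup E] [NormedSpace 𝕜 E]
  [NormedAddCommGroup F] [NormedSpace 𝕜 F] {f : E → F} {s : Set E}

lemma exists_mem_nhdsWithin_isBounded_image_fderiv (hs : IsOpen s) {x : E}
    (hf : ContDiffWithinAt 𝕜 1 f (closure s) x) (hx : x ∈ closure s) :
    ∃ t ∈ 𝓝[closure s] x, Bornology.IsBounded (fderiv 𝕜 f '' (t ∩ s)) := by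
  rw [← zero_add (1 : WithTop ℕ∞)] at hf
  obtain ⟨u, hu, -, -, f', hf', hcont⟩ :=
    (contDiffWithinAt_succ_iff_hasFDerivWithinAt' (by simp)).1 hf
  rw [Set.insert_eq_of_mem hx] at hu
  have hlt : ∀ᶠ y in 𝓝[closure s] x, ‖f' y‖ < ‖f' x‖ + 1 :=
    hcont.continuousWithinAt.norm.eventually_lt_const (lt_add_one ‖f' x‖)
  refine ⟨u ∩ {y | ‖f' y‖ < ‖f' x‖ + 1}, Filter.inter_mem hu hlt,
    isBounded_iff_forall_norm_le.2 ⟨‖f' x‖ + 1, ?_⟩⟩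
  rintro _ ⟨y, ⟨⟨hyu, hy⟩, hys⟩, rfl⟩
  have hfderiv : HasFDerivAt f (f' y) y :=
    ((hf' y hyu).mono subset_closure).hasFDerivAt (hs.mem_nhds hys)
  rw [hfderiv.fderiv]
  exact hy.le

lemma isBounded_image_fderiv_of_contDiffOn_closure (hs : IsOpen s) (hc : IsCompact (closure s))
    (hf : ContDiffOn 𝕜 1 f (closure s)) : Bornology.IsBounded (fderiv 𝕜 f '' s) := by
  rw [← Set.inter_eq_self_of_subset_right (subset_closure (s := s))]
  refine hc.induction_on (p := fun t => Bornology.IsBounded (fderiv 𝕜 f '' (t ∩ s))) (by simp)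
    (fun t u htu hu => hu.subset (by gcongr)) (fun t u ht hu => ?_)
    (fun x hx => exists_mem_nhdsWithin_isBounded_image_fderiv hs (hf x hx) hx)
  rw [Set.union_inter_distrib_right, Set.image_union]
  exact ht.union hu

lemma lineDeriv_eqOn_fderiv_apply (hs : IsOpen s) (hf : ContDiffOn 𝕜 1 f s) (v : E) :
    Set.EqOn (fun x => lineDeriv 𝕜 f x v) (fun x => fderiv 𝕜 f x v) s := fun _ hx =>
  ((hf.differentiableOn one_ne_zero).differentiableAt (hs.mem_nhds hx)).lineDeriv_eq_fderiv

lemma continuousOn_lineDeriv (hs : IsOpen s) (hf : ContDiffOn 𝕜 1 f s) (v : E) :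
    ContinuousOn (fun x => lineDeriv 𝕜 f x v) s :=
  ((hf.continuousOn_fderiv_of_isOpen hs le_rfl).clm_apply continuousOn_const).congr
    (lineDeriv_eqOn_fderiv_apply hs hf v)

lemma exists_norm_lineDeriv_le_of_contDiffOn_closure (hs : IsOpen s) (hc : IsCompact (closure s))
    (hf : ContDiffOn 𝕜 1 f (closure s)) (v : E) : ∃ C, ∀ x ∈ s, ‖lineDeriv 𝕜 f x v‖ ≤ C := by
  obtain ⟨C, hC⟩ := isBounded_iff_forall_norm_le.1
    (isBounded_image_fderiv_of_contDiffOn_closure hs hc hf)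
  refine ⟨C * ‖v‖, fun x hx => ?_⟩
  rw [show lineDeriv 𝕜 f x v = fderiv 𝕜 f x v from
    lineDeriv_eqOn_fderiv_apply hs (hf.mono subset_closure) v hx]
  exact (fderiv 𝕜 f x).le_of_opNorm_le (hC _ (Set.mem_image_of_mem _ hx)) v

end Calculus

section Integration

lemma sq_lintegral_le_measure_univ_mul_lintegral_sq {α : Type*} [MeasurableSpace α]
    (μ : Measure α) {f : α → ℝ≥0∞} (hf : AEMeasurable f μ) :
    (∫⁻ a, f a ∂μ) ^ 2 ≤ μ Set.univ * ∫⁻ a, f a ^ 2 ∂μ := by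
  have hHolder : ∫⁻ a, f a ∂μ ≤
      μ Set.univ ^ (1 / 2 : ℝ) * (∫⁻ a, f a ^ (2 : ℝ) ∂μ) ^ (1 / 2 : ℝ) := by
    simpa only [Pi.mul_apply, one_mul, ENNReal.one_rpow, lintegral_one] using
      ENNReal.lintegral_mul_le_Lp_mul_Lq μ Real.HolderConjugate.two_two
        (aemeasurable_const (b := (1 : ℝ≥0∞))) hf
  calc (∫⁻ a, f a ∂μ) ^ 2
      ≤ (μ Set.univ ^ (1 / 2 : ℝ) * (∫⁻ a, f a ^ (2 : ℝ) ∂μ) ^ (1 / 2 : ℝ)) ^ 2 := by gcongr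
    _ = μ Set.univ * ∫⁻ a, f a ^ 2 ∂μ := by
      simp only [mul_pow, ← ENNReal.rpow_two, ← ENNReal.rpow_mul]
      norm_num

lemma lintegral_enorm_Ioo_neg_self {R : ℝ} (hR : 0 ≤ R) :
    ∫⁻ t in Set.Ioo (-R) R, ‖t‖ₑ = ENNReal.ofReal (R ^ 2) := by
  have hle : -R ≤ R := by linarith
  have hint : ∀ a b : ℝ, IntervalIntegrable (fun t : ℝ => ‖t‖) volume a b :=
    continuous_norm.intervalIntegrable
  have hright : ∫ t in (0 : ℝ)..R, ‖t‖ = R ^ 2 / 2 := by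
    rw [intervalIntegral.integral_congr (g := id) fun t ht => ?_]
    · simp
    · rw [Set.uIcc_of_le hR] at ht
      exact Real.norm_of_nonneg ht.1
  have hleft : ∫ t in (-R)..0, ‖t‖ = ∫ t in (0 : ℝ)..R, ‖t‖ := by
    simpa using (intervalIntegral.integral_comp_neg (a := 0) (b := R) fun t : ℝ => ‖t‖).symm
  rw [restrict_Ioo_eq_restrict_Ioc, ← ofReal_integral_norm_eq_lintegral_enorm
      ((intervalIntegrable_iff_integrableOn_Ioc_of_le hle).1
        intervalIntegral.intervalIntegrable_id),
    ← intervalIntegral.integral_of_le hle,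
    ← intervalIntegral.integral_add_adjacent_intervals (hint _ 0) (hint _ _), hleft, hright,
    add_halves]

lemma measurable_indicator_of_continuousOn {α β : Type*} [TopologicalSpace α] [MeasurableSpace α]
    [OpensMeasurableSpace α] [TopologicalSpace β] [MeasurableSpace β] [BorelSpace β] [Zero β]
    {f : α → β} {s : Set α} (hs : MeasurableSet s) (hf : ContinuousOn f s) :
    Measurable (s.indicator f) := by
  classical
  rw [← Set.piecewise_eq_indicator]
  exact hf.measurable_piecewise continuousOn_const hs

lemma integral_le_mul_integral_of_lintegral_enorm_le {α : Type*} [MeasurableSpace α]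
    {μ : Measure α} {f g : α → ℝ} {c : ℝ} (hc : 0 ≤ c) (hg : Integrable g μ)
    (hg0 : 0 ≤ᵐ[μ] g) (hfg : ∫⁻ a, ‖f a‖ₑ ∂μ ≤ ENNReal.ofReal c * ∫⁻ a, ‖g a‖ₑ ∂μ) :
    ∫ a, f a ∂μ ≤ c * ∫ a, g a ∂μ := by
  have hG0 : 0 ≤ ∫ a, g a ∂μ := integral_nonneg_of_ae hg0
  have hG : ∫⁻ a, ‖g a‖ₑ ∂μ = ENNReal.ofReal (∫ a, g a ∂μ) := by
    rw [ofReal_integral_eq_lintegral_ofReal hg hg0]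
    refine lintegral_congr_ae ?_
    filter_upwards [hg0] with a ha using Real.enorm_of_nonneg ha
  rw [hG, ← ENNReal.ofReal_mul hc] at hfg
  refine (Real.le_norm_self _).trans ((ENNReal.ofReal_le_ofReal_iff (mul_nonneg hc hG0)).1 ?_)
  rw [ofReal_norm]
  exact (enorm_integral_le_lintegral_enorm f).trans hfg

lemma lintegral_pi_le_of_lintegral_update_le {ι : Type*} [Fintype ι] [DecidableEq ι]
    {α : ι → Type*} [∀ i, MeasurableSpace (α i)] (μ : ∀ i, Measure (α i))
    [∀ i, SigmaFinite (μ i)] (j : ι) {f g : (∀ i, α i) → ℝ≥0∞} (hg : Measurable g)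
    (hfg : ∀ y, ∫⁻ t, f (update y j t) ∂μ j ≤ ∫⁻ t, g (update y j t) ∂μ j) :
    ∫⁻ y, f y ∂Measure.pi μ ≤ ∫⁻ y, g y ∂Measure.pi μ := by
  obtain ⟨f₀, hf₀, hle, heq⟩ := exists_measurable_le_lintegral_eq (Measure.pi μ) f
  rw [heq]
  refine lintegral_le_of_lmarginal_le {j} hf₀ hg fun y => ?_
  simp only [lmarginal_singleton]
  exact (lintegral_mono fun t => hle _).trans (hfg y)

end Integration

section WeightedPrimitive

variable {E : Type*} [NormedAddCommGroup E] [NormedSpace ℝ E]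

lemma sq_enorm_intervalIntegral_le (f : ℝ → E) (a b : ℝ) :
    ‖∫ τ in a..b, f τ‖ₑ ^ 2 ≤ ‖b - a‖ₑ * ∫⁻ τ in Set.uIoc a b, ‖f τ‖ₑ ^ 2 := by
  have hnorm : ‖∫ τ in a..b, f τ‖ₑ = ‖∫ τ in Set.uIoc a b, f τ‖ₑ := by
    rw [← ofReal_norm, ← ofReal_norm, intervalIntegral.norm_intervalIntegral_eq]
  rw [hnorm]
  by_cases hf : AEStronglyMeasurable f (volume.restrict (Set.uIoc a b))
  · calc ‖∫ τ in Set.uIoc a b, f τ‖ₑ ^ 2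
        ≤ (∫⁻ τ in Set.uIoc a b, ‖f τ‖ₑ) ^ 2 := by
          gcongr
          exact enorm_integral_le_lintegral_enorm f
      _ ≤ volume.restrict (Set.uIoc a b) Set.univ * ∫⁻ τ in Set.uIoc a b, ‖f τ‖ₑ ^ 2 :=
          sq_lintegral_le_measure_univ_mul_lintegral_sq _ hf.enorm
      _ = ‖b - a‖ₑ * ∫⁻ τ in Set.uIoc a b, ‖f τ‖ₑ ^ 2 := by
          rw [Measure.restrict_apply_univ, Real.volume_uIoc, Real.enorm_eq_ofReal_abs]
  · simp [integral_non_aestronglyMeasurable hf]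

lemma setLIntegral_sq_enorm_primitive_mul_le {f : ℝ → E} {w : ℝ → ℝ≥0∞} {S : Set ℝ} {R : ℝ}
    (hS : MeasurableSet S) (hR : 0 ≤ R) (hSR : S ⊆ Set.Ioo (-R) R)
    (hmem : ∀ t ∈ S, ∀ s, |s| ≤ |t| → s ∈ S) (hw : ∀ t ∈ S, ∀ s, |s| ≤ |t| → w t ≤ w s) :
    ∫⁻ t in S, ‖∫ τ in (0 : ℝ)..t, f τ‖ₑ ^ 2 * w t ≤
      ENNReal.ofReal (R ^ 2) * ∫⁻ t in S, ‖f t‖ₑ ^ 2 * w t := by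
  have hpointwise : ∀ t ∈ S, ‖∫ τ in (0 : ℝ)..t, f τ‖ₑ ^ 2 * w t ≤
      ‖t‖ₑ * ∫⁻ τ in S, ‖f τ‖ₑ ^ 2 * w τ := fun t ht => by
    have habs : ∀ τ ∈ Set.uIoc 0 t, |τ| ≤ |t| := fun τ hτ => by
      simpa using Set.abs_sub_left_of_mem_uIcc (Set.uIoc_subset_uIcc hτ)
    calc ‖∫ τ in (0 : ℝ)..t, f τ‖ₑ ^ 2 * w t
        ≤ ‖t‖ₑ * (∫⁻ τ in Set.uIoc 0 t, ‖f τ‖ₑ ^ 2) * w t := by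
          gcongr
          simpa using sq_enorm_intervalIntegral_le f 0 t
      _ ≤ ‖t‖ₑ * ∫⁻ τ in Set.uIoc 0 t, ‖f τ‖ₑ ^ 2 * w t := by
          rw [mul_assoc]
          gcongr
          exact lintegral_mul_const_le _ _
      _ ≤ ‖t‖ₑ * ∫⁻ τ in Set.uIoc 0 t, ‖f τ‖ₑ ^ 2 * w τ := by
          gcongr ‖t‖ₑ * ?_
          refine setLIntegral_mono' measurableSet_uIoc fun τ hτ => ?_
          gcongr
          exact hw t ht τ (habs τ hτ)
      _ ≤ ‖t‖ₑ * ∫⁻ τ in S, ‖f τ‖ₑ ^ 2 * w τ := by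
          gcongr
          exact fun τ hτ => hmem t ht τ (habs τ hτ)
  calc ∫⁻ t in S, ‖∫ τ in (0 : ℝ)..t, f τ‖ₑ ^ 2 * w t
      ≤ ∫⁻ t in S, ‖t‖ₑ * ∫⁻ τ in S, ‖f τ‖ₑ ^ 2 * w τ := setLIntegral_mono' hS hpointwise
    _ = (∫⁻ t in S, ‖t‖ₑ) * ∫⁻ τ in S, ‖f τ‖ₑ ^ 2 * w τ :=
        lintegral_mul_const _ measurable_enorm
    _ ≤ (∫⁻ t in Set.Ioo (-R) R, ‖t‖ₑ) * ∫⁻ τ in S, ‖f τ‖ₑ ^ 2 * w τ := by gcongr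
    _ = ENNReal.ofReal (R ^ 2) * ∫⁻ t in S, ‖f t‖ₑ ^ 2 * w t := by
        rw [lintegral_enorm_Ioo_neg_self hR]

/-- The primitive of `f` in the `j`-th coordinate of the second factor that vanishes on
`{y_j = 0}`. For `j = lastIdx m` it is `Iop f`. -/
def coordPrimitive {X ι : Type*} [DecidableEq ι] (j : ι) (f : X × (ι → ℝ) → E)
    (p : X × (ι → ℝ)) : E :=
  ∫ τ in (0 : ℝ)..p.2 j, f (p.1, update p.2 j τ)

lemma coordPrimitive_update {X ι : Type*} [DecidableEq ι] (j : ι) (f : X × (ι → ℝ) → E)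
    (x : X) (y : ι → ℝ) (t : ℝ) :
    coordPrimitive j f (x, update y j t) = ∫ τ in (0 : ℝ)..t, f (x, update y j τ) := by
  simp only [coordPrimitive, update_self, update_idem]

variable {X ι : Type*} [MeasurableSpace X] {μ : Measure X} [DecidableEq ι]
  {Ω : Set (X × (ι → ℝ))} {R : ℝ}

lemma lintegral_update_indicator_sq_enorm_coordPrimitive_mul_le (j : ι) {f : X × (ι → ℝ) → E}
    {w : X × (ι → ℝ) → ℝ≥0∞} (hΩ : MeasurableSet Ω) (hR : 0 ≤ R) (hΩR : ∀ p ∈ Ω, |p.2 j| < R)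
    (hmem : ∀ p ∈ Ω, ∀ t, |t| ≤ |p.2 j| → (p.1, update p.2 j t) ∈ Ω)
    (hw : ∀ p ∈ Ω, ∀ t, |t| ≤ |p.2 j| → w p ≤ w (p.1, update p.2 j t)) (x : X) (y : ι → ℝ) :
    ∫⁻ t, Ω.indicator (fun p => ‖coordPrimitive j f p‖ₑ ^ 2 * w p) (x, update y j t) ≤
      ENNReal.ofReal (R ^ 2) *
        ∫⁻ t, Ω.indicator (fun p => ‖f p‖ₑ ^ 2 * w p) (x, update y j t) := by
  set line : ℝ → X × (ι → ℝ) := fun t => (x, update y j t) with hline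
  have hS : MeasurableSet (line ⁻¹' Ω) :=
    (measurable_const.prodMk (measurable_update y) : Measurable line) hΩ
  have hindicator : ∀ g : X × (ι → ℝ) → ℝ≥0∞,
      ∫⁻ t, Ω.indicator g (line t) = ∫⁻ t in line ⁻¹' Ω, g (line t) := fun g =>
    lintegral_indicator hS fun t => g (line t)
  rw [hindicator, hindicator]
  simp only [hline, coordPrimitive_update]
  refine setLIntegral_sq_enorm_primitive_mul_le (f := fun t => f (line t))
    (w := fun t => w (line t)) hS hR (fun t ht => abs_lt.1 ?_) (fun t ht s hs => ?_)
    (fun t ht s hs => ?_)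
  · simpa [line] using hΩR _ ht
  · simpa [line] using hmem _ ht s (by simpa [line] using hs)
  · simpa [line] using hw _ ht s (by simpa [line] using hs)

variable [Fintype ι]

lemma setLIntegral_sq_enorm_coordPrimitive_mul_le (j : ι) {f : X × (ι → ℝ) → E}
    {w : X × (ι → ℝ) → ℝ≥0∞} (hΩ : MeasurableSet Ω) (hR : 0 ≤ R) (hΩR : ∀ p ∈ Ω, |p.2 j| < R)
    (hmem : ∀ p ∈ Ω, ∀ t, |t| ≤ |p.2 j| → (p.1, update p.2 j t) ∈ Ω)
    (hw : ∀ p ∈ Ω, ∀ t, |t| ≤ |p.2 j| → w p ≤ w (p.1, update p.2 j t))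
    (hf : Measurable (Ω.indicator fun p => ‖f p‖ₑ ^ 2 * w p)) :
    ∫⁻ p in Ω, ‖coordPrimitive j f p‖ₑ ^ 2 * w p ∂μ.prod volume ≤
      ENNReal.ofReal (R ^ 2) * ∫⁻ p in Ω, ‖f p‖ₑ ^ 2 * w p ∂μ.prod volume := by
  set lhs := Ω.indicator fun p => ‖coordPrimitive j f p‖ₑ ^ 2 * w p
  set rhs := Ω.indicator fun p => ‖f p‖ₑ ^ 2 * w p
  have hline : ∀ x y, ∫⁻ t, lhs (x, update y j t) ≤
      ∫⁻ t, ENNReal.ofReal (R ^ 2) * rhs (x, update y j t) := fun x y => by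
    rw [lintegral_const_mul' _ _ ENNReal.ofReal_ne_top]
    exact lintegral_update_indicator_sq_enorm_coordPrimitive_mul_le j hΩ hR hΩR hmem hw x y
  calc ∫⁻ p in Ω, ‖coordPrimitive j f p‖ₑ ^ 2 * w p ∂μ.prod volume
      = ∫⁻ p, lhs p ∂μ.prod volume := (lintegral_indicator hΩ _).symm
    _ ≤ ∫⁻ x, ∫⁻ y, lhs (x, y) ∂volume ∂μ := lintegral_prod_le _
    _ ≤ ∫⁻ x, ∫⁻ y, ENNReal.ofReal (R ^ 2) * rhs (x, y) ∂volume ∂μ :=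
        lintegral_mono fun x => lintegral_pi_le_of_lintegral_update_le (fun _ => volume) j
          ((hf.comp measurable_prodMk_left).const_mul _) (hline x)
    _ = ∫⁻ p, ENNReal.ofReal (R ^ 2) * rhs p ∂μ.prod volume :=
        (lintegral_prod _ (hf.const_mul _).aemeasurable).symm
    _ = ENNReal.ofReal (R ^ 2) * ∫⁻ p in Ω, ‖f p‖ₑ ^ 2 * w p ∂μ.prod volume := by
        rw [lintegral_const_mul _ hf, lintegral_indicator hΩ]

lemma setIntegral_sq_coordPrimitive_mul_le (j : ι) {f w : X × (ι → ℝ) → ℝ}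
    (hΩ : MeasurableSet Ω) (hR : 0 ≤ R) (hΩR : ∀ p ∈ Ω, |p.2 j| < R)
    (hmem : ∀ p ∈ Ω, ∀ t, |t| ≤ |p.2 j| → (p.1, update p.2 j t) ∈ Ω)
    (hw0 : ∀ p ∈ Ω, 0 ≤ w p)
    (hw : ∀ p ∈ Ω, ∀ t, |t| ≤ |p.2 j| → w p ≤ w (p.1, update p.2 j t))
    (hf : Measurable (Ω.indicator fun p => f p ^ 2 * w p))
    (hint : IntegrableOn (fun p => f p ^ 2 * w p) Ω (μ.prod volume)) :
    ∫ p in Ω, coordPrimitive j f p ^ 2 * w p ∂μ.prod volume ≤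
      R ^ 2 * ∫ p in Ω, f p ^ 2 * w p ∂μ.prod volume := by
  refine integral_le_mul_integral_of_lintegral_enorm_le (sq_nonneg R) hint ?_ ?_
  · filter_upwards [ae_restrict_mem hΩ] with p hp using mul_nonneg (sq_nonneg _) (hw0 p hp)
  simp only [enorm_mul, enorm_pow]
  refine setLIntegral_sq_enorm_coordPrimitive_mul_le j (w := fun p => ‖w p‖ₑ) hΩ hR hΩR hmem
    (fun p hp t ht => ?_) ?_
  · rw [Real.enorm_of_nonneg (hw0 p hp), Real.enorm_of_nonneg (hw0 _ (hmem p hp t ht))]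
    exact ENNReal.ofReal_le_ofReal (hw p hp t ht)
  · simpa only [enorm_indicator_eq_indicator_enorm, enorm_mul, enorm_pow] using hf.enorm

end WeightedPrimitive

section Domain

variable {n m : ℕ} [NeZero n] {δ γ α₀ lam ν : ℝ} {x0 : Fin n → ℝ} {y0 : Fin m → ℝ} {p q : Pt n m}

lemma continuous_psiF : Continuous (psiF δ α₀ x0 y0) := by
  unfold psiF
  fun_prop

lemma lt_psiF_of_pos (hδ : 0 < δ) (hp : 0 < p.1 0) : α₀ < psiF δ α₀ x0 y0 p := by
  unfold psiF
  have hx₁ : 0 < δ * p.1 0 := mul_pos hδ hp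
  have hx : 0 ≤ ∑ i ∈ univ.erase (0 : Fin n), (p.1 i - x0 i) ^ 2 := by positivity
  have hy : 0 ≤ ∑ j, (p.2 j - y0 j) ^ 2 := by positivity
  linarith

lemma psiF_update_le {j : Fin m} (hy0 : y0 j = 0) {t : ℝ} (ht : |t| ≤ |p.2 j|) :
    psiF δ α₀ x0 y0 (p.1, update p.2 j t) ≤ psiF δ α₀ x0 y0 p := by
  have hterm : ∀ k ∈ univ, (update p.2 j t k - y0 k) ^ 2 ≤ (p.2 k - y0 k) ^ 2 := fun k _ => by
    rcases eq_or_ne k j with rfl | hk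
    · simpa [hy0] using sq_le_sq.2 ht
    · rw [update_of_ne hk]
  have hsum := sum_le_sum hterm
  unfold psiF
  gcongr

lemma isOpen_OmegaG : IsOpen (OmegaG δ γ α₀ x0 y0) :=
  (isOpen_lt continuous_const ((continuous_apply 0).comp continuous_fst)).inter
    ((isOpen_lt continuous_const continuous_psiF).inter
      (isOpen_lt continuous_psiF continuous_const))

lemma update_mem_OmegaG (hδ : 0 < δ) {j : Fin m} (hy0 : y0 j = 0)
    (hp : p ∈ OmegaG δ γ α₀ x0 y0) {t : ℝ} (ht : |t| ≤ |p.2 j|) :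
    (p.1, update p.2 j t) ∈ OmegaG δ γ α₀ x0 y0 :=
  ⟨hp.1, lt_psiF_of_pos hδ hp.1, (psiF_update_le hy0 ht).trans_lt hp.2.2⟩

lemma fst_zero_lt_of_mem_OmegaG (hδ : 0 < δ) (hp : p ∈ OmegaG δ γ α₀ x0 y0) :
    p.1 0 < γ / δ := by
  have hψ := hp.2.2
  unfold psiF at hψ
  have hx : 0 ≤ ∑ i ∈ univ.erase (0 : Fin n), (p.1 i - x0 i) ^ 2 := by positivity
  have hy : 0 ≤ ∑ j, (p.2 j - y0 j) ^ 2 := by positivity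
  rw [lt_div_iff₀' hδ]
  linarith

lemma abs_fst_sub_lt_of_mem_OmegaG (hδ : 0 < δ) (hp : p ∈ OmegaG δ γ α₀ x0 y0) {i : Fin n}
    (hi : i ≠ 0) : |p.1 i - x0 i| < √(2 * γ) := by
  have hψ := hp.2.2
  unfold psiF at hψ
  have hx₁ : 0 < δ * p.1 0 := mul_pos hδ hp.1
  have hxi : (p.1 i - x0 i) ^ 2 ≤ ∑ i ∈ univ.erase (0 : Fin n), (p.1 i - x0 i) ^ 2 :=
    single_le_sum (f := fun i => (p.1 i - x0 i) ^ 2) (fun _ _ => sq_nonneg _)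
      (mem_erase.2 ⟨hi, mem_univ i⟩)
  have hy : 0 ≤ ∑ j, (p.2 j - y0 j) ^ 2 := by positivity
  exact abs_lt.2 (Real.sq_lt.1 (by linarith))

lemma abs_snd_sub_lt_of_mem_OmegaG (hδ : 0 < δ) (hp : p ∈ OmegaG δ γ α₀ x0 y0) (j : Fin m) :
    |p.2 j - y0 j| < √(2 * γ) := by
  have hψ := hp.2.2
  unfold psiF at hψ
  have hx₁ : 0 < δ * p.1 0 := mul_pos hδ hp.1
  have hx : 0 ≤ ∑ i ∈ univ.erase (0 : Fin n), (p.1 i - x0 i) ^ 2 := by positivity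
  have hyj : (p.2 j - y0 j) ^ 2 ≤ ∑ j, (p.2 j - y0 j) ^ 2 :=
    single_le_sum (f := fun j => (p.2 j - y0 j) ^ 2) (fun _ _ => sq_nonneg _) (mem_univ j)
  exact abs_lt.2 (Real.sq_lt.1 (by linarith))

lemma isBounded_OmegaG (hδ : 0 < δ) : Bornology.IsBounded (OmegaG δ γ α₀ x0 y0) := by
  refine (Metric.isBounded_closedBall (x := (update x0 0 0, y0))
    (r := max (γ / δ) √(2 * γ))).subset fun p hp => ?_
  have hr : 0 ≤ max (γ / δ) √(2 * γ) := le_max_of_le_right (Real.sqrt_nonneg _)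
  refine max_le ((dist_pi_le_iff hr).2 fun i => ?_) ((dist_pi_le_iff hr).2 fun j => ?_)
  · simp only [Real.dist_eq]
    rcases eq_or_ne i 0 with rfl | hi
    · rw [update_self, sub_zero, abs_of_pos hp.1]
      exact le_max_of_le_left (fst_zero_lt_of_mem_OmegaG hδ hp).le
    · rw [update_of_ne hi]
      exact le_max_of_le_right (abs_fst_sub_lt_of_mem_OmegaG hδ hp hi).le
  · exact le_max_of_le_right (abs_snd_sub_lt_of_mem_OmegaG hδ hp j).le

lemma chiF_le_exp_of_le_psiF (hlam : 0 ≤ lam) (hν : 0 ≤ ν) {r : ℝ} (hr : 0 < r)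
    (hp : r ≤ psiF δ α₀ x0 y0 p) :
    chiF lam ν δ α₀ x0 y0 p ≤ Real.exp (lam * r ^ (-ν)) := by
  unfold chiF
  have hpow := Real.rpow_le_rpow_of_nonpos hr hp (neg_nonpos.2 hν)
  gcongr

lemma continuousOn_chiF (hα₀ : 0 ≤ α₀) :
    ContinuousOn (chiF lam ν δ α₀ x0 y0) (OmegaG δ γ α₀ x0 y0) :=
  Real.continuous_exp.comp_continuousOn <| continuousOn_const.mul <|
    continuous_psiF.continuousOn.rpow_const fun _ hp => Or.inl (hα₀.trans_lt hp.2.1).ne'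

lemma continuousOn_sq_pd_mul_sq_chiF (hα₀ : 0 ≤ α₀) {z : Pt n m → ℝ}
    (hz : ContDiffOn ℝ 1 z (OmegaG δ γ α₀ x0 y0)) (v : Pt n m) :
    ContinuousOn (fun p => pd v z p ^ 2 * chiF lam ν δ α₀ x0 y0 p ^ 2) (OmegaG δ γ α₀ x0 y0) :=
  ((continuousOn_lineDeriv isOpen_OmegaG hz v).pow 2).mul ((continuousOn_chiF hα₀).pow 2)

lemma integrableOn_sq_pd_mul_sq_chiF (hδ : 0 < δ) (hα₀ : 0 < α₀) (hlam : 0 ≤ lam) (hν : 0 ≤ ν)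
    {z : Pt n m → ℝ} (hz : ContDiffOn ℝ 1 z (closure (OmegaG δ γ α₀ x0 y0))) (v : Pt n m) :
    IntegrableOn (fun p => pd v z p ^ 2 * chiF lam ν δ α₀ x0 y0 p ^ 2) (OmegaG δ γ α₀ x0 y0) := by
  obtain ⟨C, hC⟩ := exists_norm_lineDeriv_le_of_contDiffOn_closure isOpen_OmegaG
    (isBounded_OmegaG hδ).isCompact_closure hz v
  refine IntegrableOn.of_bound (isBounded_OmegaG hδ).measure_lt_top
    ((continuousOn_sq_pd_mul_sq_chiF hα₀.le (hz.mono subset_closure) v).aestronglyMeasurable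
      isOpen_OmegaG.measurableSet) (C ^ 2 * Real.exp (lam * α₀ ^ (-ν)) ^ 2) ?_
  filter_upwards [ae_restrict_mem isOpen_OmegaG.measurableSet] with p hp
  have hχ : ‖chiF lam ν δ α₀ x0 y0 p‖ ≤ Real.exp (lam * α₀ ^ (-ν)) :=
    (Real.norm_of_nonneg (Real.exp_nonneg _)).trans_le
      (chiF_le_exp_of_le_psiF hlam hν hα₀ hp.2.1.le)
  rw [norm_mul, norm_pow, norm_pow]
  gcongr
  exact hC p hp

end Domain

theorem stmt5_general {n m : ℕ} [NeZero n] [NeZero m] {δ γ α₀ lam ν : ℝ} (hδ : 0 < δ)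
    (hγ : 0 ≤ γ) (hα₀ : 0 < α₀) (hlam : 0 ≤ lam) (hν : 0 ≤ ν) {x0 : Fin n → ℝ} {y0 : Fin m → ℝ}
    (hy0 : y0 (lastIdx m) = 0) {z : Pt n m → ℝ}
    (hz : ContDiffOn ℝ 1 z (closure (OmegaG δ γ α₀ x0 y0))) (v : Pt n m) :
    ∫ p in OmegaG δ γ α₀ x0 y0, (Iop (pd v z) p) ^ 2 * (chiF lam ν δ α₀ x0 y0 p) ^ 2
      ≤ 2 * γ * ∫ p in OmegaG δ γ α₀ x0 y0,
          (pd v z p) ^ 2 * (chiF lam ν δ α₀ x0 y0 p) ^ 2 := by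
  have hΩ : MeasurableSet (OmegaG δ γ α₀ x0 y0) := isOpen_OmegaG.measurableSet
  have hy : ∀ p ∈ OmegaG δ γ α₀ x0 y0, |p.2 (lastIdx m)| < √(2 * γ) := fun p hp => by
    simpa [hy0] using abs_snd_sub_lt_of_mem_OmegaG hδ hp (lastIdx m)
  have hχ : ∀ p ∈ OmegaG δ γ α₀ x0 y0, ∀ t, |t| ≤ |p.2 (lastIdx m)| →
      chiF lam ν δ α₀ x0 y0 p ^ 2 ≤ chiF lam ν δ α₀ x0 y0 (p.1, update p.2 (lastIdx m) t) ^ 2 :=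
    fun p hp t ht => pow_le_pow_left₀ (Real.exp_nonneg _) (chiF_le_exp_of_le_psiF hlam hν
      (hα₀.trans (update_mem_OmegaG hδ hy0 hp ht).2.1) (psiF_update_le hy0 ht)) 2
  have hmeas := measurable_indicator_of_continuousOn hΩ
    (continuousOn_sq_pd_mul_sq_chiF (lam := lam) (ν := ν) hα₀.le (hz.mono subset_closure) v)
  rw [← Real.sq_sqrt (show 0 ≤ 2 * γ by positivity)]
  exact setIntegral_sq_coordPrimitive_mul_le (lastIdx m) hΩ (Real.sqrt_nonneg _) hy
    (fun p hp t => update_mem_OmegaG hδ hy0 hp) (fun p _ => sq_nonneg _) hχ hmeas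
    (integrableOn_sq_pd_mul_sq_chiF hδ hα₀ hlam hν hz v)

/-- (Lemma 4, second inequality.)  For every `z ∈ C¹(cl Ω_γ)` and every `i ∈ {1,…,n}`,
`∫_{Ω_γ} (I_{x_i}z)² χ² ≤ 2γ ∫_{Ω_γ} (∂z/∂x_i)² χ²`, where
`I_{x_i}z = ∫₀^{y_m} (∂z/∂x_i)(x,y′,τ) dτ`. -/
theorem stmt5 (n m : ℕ) [NeZero n] [NeZero m] (hn : 2 ≤ n) (hm : 2 ≤ m)
    (δ γ α₀ lam ν : ℝ) (hδ : 4 < δ) (hγ0 : 0 < γ) (hγ1 : γ < 1)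
    (hα₀ : 0 < α₀) (hγα : γ + α₀ < 1) (hlam : 0 < lam) (hν : 1 < ν)
    (x0 : Fin n → ℝ) (y0 : Fin m → ℝ) (hx0 : x0 0 = 0) (hy0 : y0 (lastIdx m) = 0)
    (z : Pt n m → ℝ) (hz : ContDiffOn ℝ 1 z (closure (OmegaG δ γ α₀ x0 y0))) :
    ∀ i : Fin n,
      ∫ p in OmegaG δ γ α₀ x0 y0, (Iop (pd (ex i) z) p) ^ 2 * (chiF lam ν δ α₀ x0 y0 p) ^ 2
        ≤ 2 * γ * ∫ p in OmegaG δ γ α₀ x0 y0,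
            (pd (ex i) z p) ^ 2 * (chiF lam ν δ α₀ x0 y0 p) ^ 2 := fun i =>
  stmt5_general (by linarith) hγ0.le hα₀ hlam.le (by linarith) hy0 hz (ex i)
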